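/- arXiv:2002.02658 — 4 statements merged into one kernel-verified Lean document; each statement's English description precedes it below -/
import Mathlib

section
/- For all complex numbers x, y, z, the three polynomials x²yz² − z⁵ + x⁵, x²(x²y − z³), and xz(x²y − z³) vanish simultaneously at (x, y, z) if and only if x = 0 and z = 0. In particular, the unique proper base-point (common zero in ℙ²_ℂ of the three defining polynomials) of the birational map ψ is the point (0 : 1 : 0). -/
/-- The three degree-5 polynomials defining `ψ` vanish simultaneously at `(x, y, z) ∈ ℂ³`
if and only if `x = 0` and `z = 0`; in particular the unique proper base-point of `ψ` in
`ℙ²_ℂ` is the point `(0 : 1 : 0)`. -/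
theorem psi_base_locus (x y z : ℂ) :
    (x ^ 2 * y * z ^ 2 - z ^ 5 + x ^ 5 = 0 ∧
      x ^ 2 * (x ^ 2 * y - z ^ 3) = 0 ∧
      x * z * (x ^ 2 * y - z ^ 3) = 0) ↔ (x = 0 ∧ z = 0) := by
  constructor
  · rintro ⟨h₁, -, h₃⟩
    -- With `q = x²y - z³`, the first component is `z²q + x⁵`;
    -- multiplying by `x` and subtracting `z · (xzq)` leaves `x⁶`.
    have hx : x = 0 := by
      have h : x ^ 6 = 0 := by linear_combination x * h₁ - z * h₃
      exact pow_eq_zero_iff (by norm_num) |>.mp h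
    subst hx
    have h : z ^ 5 = 0 := by linear_combination -h₁
    exact ⟨rfl, pow_eq_zero_iff (by norm_num) |>.mp h⟩
  · rintro ⟨rfl, rfl⟩
    norm_num
end

section
/- In the polynomial ring ℂ[x, y, z], every common divisor of the three polynomials x²yz² − z⁵ + x⁵, x²(x²y − z³), and xz(x²y − z³) is a unit (i.e. these three degree-5 homogeneous polynomials have no common non-constant factor). Consequently the formula (x : y : z) ⇢ (x²yz² − z⁵ + x⁵ : x²(x²y − z³) : xz(x²y − z³)) defines a rational self map of ℙ²_ℂ of degree exactly 5. -/
/-!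
Write `w = x²y − z³`, so that the components are `A = z²w + x⁵`, `x²w` and `xzw`. Since
`xA − z(xzw) = x⁶`, every common divisor divides both `x⁶` and `A`. The variable `x` is prime
and does not divide `A`, because `A` takes the value `−1` at `(0, 0, 1)`; hence `x⁶` and `A` are
relatively prime.
-/

open MvPolynomial

/-- In `ℂ[x, y, z]`, every common divisor of the three polynomials
`x²yz² − z⁵ + x⁵`, `x²(x²y − z³)` and `xz(x²y − z³)` is a unit; moreover each of the
three polynomials is homogeneous of degree `5`, so that the formula
`(x : y : z) ⇢ (x²yz² − z⁵ + x⁵ : x²(x²y − z³) : xz(x²y − z³))` defines a rational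
self map of `ℙ²_ℂ` of degree exactly `5`. -/
theorem psi_components_coprime_degree_five :
    ∀ (x y z : MvPolynomial (Fin 3) ℂ), x = X 0 → y = X 1 → z = X 2 →
    (∀ d : MvPolynomial (Fin 3) ℂ,
        d ∣ x ^ 2 * y * z ^ 2 - z ^ 5 + x ^ 5 →
        d ∣ x ^ 2 * (x ^ 2 * y - z ^ 3) →
        d ∣ x * z * (x ^ 2 * y - z ^ 3) → IsUnit d) ∧
    (x ^ 2 * y * z ^ 2 - z ^ 5 + x ^ 5).IsHomogeneous 5 ∧
    (x ^ 2 * (x ^ 2 * y - z ^ 3)).IsHomogeneous 5 ∧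
    (x * z * (x ^ 2 * y - z ^ 3)).IsHomogeneous 5 := by
  rintro x y z rfl rfl rfl
  have hx : (X 0 : MvPolynomial (Fin 3) ℂ).IsHomogeneous 1 := isHomogeneous_X _ _
  have hy : (X 1 : MvPolynomial (Fin 3) ℂ).IsHomogeneous 1 := isHomogeneous_X _ _
  have hz : (X 2 : MvPolynomial (Fin 3) ℂ).IsHomogeneous 1 := isHomogeneous_X _ _
  have hw : (X 0 ^ 2 * X 1 - X 2 ^ 3 : MvPolynomial (Fin 3) ℂ).IsHomogeneous 3 :=
    ((hx.pow 2).mul hy).sub (hz.pow 3)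
  refine ⟨fun d hA _ hC => ?_, ?_, (hx.pow 2).mul hw, (hx.mul hz).mul hw⟩
  · have hd : d ∣ (X 0 : MvPolynomial (Fin 3) ℂ) ^ 6 := by
      convert dvd_sub (hA.mul_left (X 0)) (hC.mul_left (X 2)) using 1
      ring
    have hirr : Irreducible (X 0 : MvPolynomial (Fin 3) ℂ) := (X_prime (i := 0)).irreducible
    refine ((hirr.isRelPrime_iff_not_dvd.2 ?_).pow_left (m := 6)) hd hA
    rintro ⟨q, hq⟩
    have h := congrArg (eval ![(0 : ℂ), 0, 1]) hq
    simp at h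
  · exact ((((hx.pow 2).mul hy).mul (hz.pow 2)).sub (hz.pow 5)).add (hx.pow 5)
end

section
/- For all complex numbers x, y with x ≠ 0 and x²y ≠ 1, setting u = (x²y + x⁵ − 1)/(x(x²y − 1)) and v = x, one has v ≠ 0, u·v ≠ 1, and (v, (v⁵ + u·v − 1)/(v²(u·v − 1))) = (x, y). -/
/-- In the affine chart `z = 1`, `σ ∘ ψ = id` on the domain of `ψ`: for `x ≠ 0` and
`x²y ≠ 1`, setting `u = (x²y + x⁵ − 1)/(x(x²y − 1))` and `v = x`, one has `v ≠ 0`,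
`u·v ≠ 1` and `(v, (v⁵ + uv − 1)/(v²(uv − 1))) = (x, y)`. -/
theorem sigma_comp_psi (x y : ℂ) (hx : x ≠ 0) (hxy : x ^ 2 * y ≠ 1)
    (u v : ℂ) (hu : u = (x ^ 2 * y + x ^ 5 - 1) / (x * (x ^ 2 * y - 1))) (hv : v = x) :
    v ≠ 0 ∧ u * v ≠ 1 ∧
    ((v, (v ^ 5 + u * v - 1) / (v ^ 2 * (u * v - 1))) : ℂ × ℂ) = (x, y) := by
  subst v
  have hD : x ^ 2 * y - 1 ≠ 0 := sub_ne_zero.mpr hxy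
  -- Everything follows from this identity: with `D = x²y - 1`, the second coordinate is
  -- `(x⁵ + x⁵/D) / (x² · x⁵/D) = (D + 1)/x² = y`.
  have key : u * x - 1 = x ^ 5 / (x ^ 2 * y - 1) := by
    rw [hu]
    field_simp
    ring
  refine ⟨hx, fun h => ?_, ?_⟩
  · rw [h, sub_self] at key
    exact div_ne_zero (pow_ne_zero 5 hx) hD key.symm
  · rw [Prod.mk.injEq]
    refine ⟨rfl, ?_⟩
    rw [add_sub_assoc, key]
    field_simp
    ring
end

section
/- For all complex numbers u, v with v ≠ 0 and u·v ≠ 1, setting x = v and y = (v⁵ + u·v − 1)/(v²(u·v − 1)), one has x ≠ 0, x²y ≠ 1, and ((x²y + x⁵ − 1)/(x(x²y − 1)), x) = (u, v). -/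
/-- In the affine chart `z = 1`, `ψ ∘ σ = id` on the domain of `σ`: for `v ≠ 0` and
`u·v ≠ 1`, setting `x = v` and `y = (v⁵ + uv − 1)/(v²(uv − 1))`, one has `x ≠ 0`,
`x²y ≠ 1` and `((x²y + x⁵ − 1)/(x(x²y − 1)), x) = (u, v)`. -/
theorem psi_comp_sigma (u v : ℂ) (hv : v ≠ 0) (huv : u * v ≠ 1)
    (x y : ℂ) (hx : x = v) (hy : y = (v ^ 5 + u * v - 1) / (v ^ 2 * (u * v - 1))) :
    x ≠ 0 ∧ x ^ 2 * y ≠ 1 ∧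
    (((x ^ 2 * y + x ^ 5 - 1) / (x * (x ^ 2 * y - 1)), x) : ℂ × ℂ) = (u, v) := by
  subst hx
  have hd : u * x - 1 ≠ 0 := sub_ne_zero.mpr huv
  -- Everything follows from `x²y - 1 = x⁵ / (ux - 1)`: it is nonzero, and the numerator
  -- `(x²y - 1) + x⁵` equals `ux` times it.
  have key : x ^ 2 * y - 1 = x ^ 5 / (u * x - 1) := by
    rw [eq_div_iff (mul_ne_zero (pow_ne_zero 2 hv) hd)] at hy
    rw [eq_div_iff hd]
    linear_combination hy
  have hne : x ^ 2 * y - 1 ≠ 0 := by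
    rw [key]
    exact div_ne_zero (pow_ne_zero 5 hv) hd
  have hnum : x ^ 2 * y + x ^ 5 - 1 = u * (x * (x ^ 2 * y - 1)) := by
    have h : (x ^ 2 * y - 1) * (u * x - 1) = x ^ 5 := by
      rw [key, div_mul_cancel₀ _ hd]
    linear_combination -h
  refine ⟨hv, sub_ne_zero.mp hne, ?_⟩
  rw [hnum, mul_div_cancel_right₀ _ (mul_ne_zero hv hne)]
end
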